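/- arXiv:2007.15808 — 4 statements merged into one kernel-verified Lean document; each statement's English description precedes it below -/
import Mathlib

section
/- Let θ ∈ ℝ and let d = 2. Suppose U is a 2×2 unitary complex matrix and V is a 4×4 unitary complex matrix such that the deterministic distinguishability condition (DDC) holds for the output states |ψ_b(x,s)⟩ = V (R_θ ⊗ U)^b (|x⟩ ⊗ |s⟩). Then θ is an integer multiple of π/4, i.e. there exists k ∈ ℤ with θ = kπ/4. -/
open Matrix
open scoped Kronecker Classical

/-- The rotation matrix `R_θ` with rows `(cos θ, −sin θ)` and `(sin θ, cos θ)`,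
viewed as a complex matrix. -/
noncomputable def Rot (θ : ℝ) : Matrix (Fin 2) (Fin 2) ℂ :=
  !![(Real.cos θ : ℂ), -(Real.sin θ : ℂ); (Real.sin θ : ℂ), (Real.cos θ : ℂ)]

/-- The output state `|ψ_b(x,s)⟩ = V (R_θ ⊗ U)^b (|x⟩ ⊗ |s⟩) ∈ ℂ^{2d}`,
where `ℂ^{2d}` is identified with `ℂ² ⊗ ℂ^d` via the index type `Fin 2 × Fin d`. -/
noncomputable def psi (d : ℕ) (θ : ℝ) (U : Matrix (Fin d) (Fin d) ℂ)
    (V : Matrix (Fin 2 × Fin d) (Fin 2 × Fin d) ℂ) (b x : Fin 2) (s : Fin d) :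
    Fin 2 × Fin d → ℂ :=
  (V * (Rot θ ⊗ₖ U) ^ (b : ℕ)).mulVec (Pi.single (x, s) 1)

/-- The deterministic distinguishability condition (DDC): for all `u`, `s`, `b`,
`⟨u|ψ_b(0,s)⟩ = 0` or `⟨u|ψ_b(1,s)⟩ = 0`. -/
def DDC (d : ℕ) (θ : ℝ) (U : Matrix (Fin d) (Fin d) ℂ)
    (V : Matrix (Fin 2 × Fin d) (Fin 2 × Fin d) ℂ) : Prop :=
  ∀ (u : Fin 2 × Fin d) (s : Fin d) (b : Fin 2),
    psi d θ U V b 0 s u = 0 ∨ psi d θ U V b 1 s u = 0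

lemma aux_prod (c s x y u00 u01 u10 u11 : ℂ) (hc : c ≠ 0) (hs : s ≠ 0)
    (hdet : u00 * u11 - u01 * u10 ≠ 0)
    (h0 : c * (x * u00 + y * u10) = 0 ∨ s * (x * u00 + y * u10) = 0)
    (h1 : c * (x * u01 + y * u11) = 0 ∨ s * (x * u01 + y * u11) = 0) :
    x = 0 ∧ y = 0 := by
  have e0 : x * u00 + y * u10 = 0 := by simpa [hc, hs] using h0
  have e1 : x * u01 + y * u11 = 0 := by simpa [hc, hs] using h1
  constructor
  · have : x * (u00 * u11 - u01 * u10) = 0 := by linear_combination u11 * e0 - u10 * e1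
    simpa [hdet] using this
  · have : y * (u00 * u11 - u01 * u10) = 0 := by linear_combination u00 * e1 - u01 * e0
    simpa [hdet] using this

/-- Classification of rows. -/
lemma aux_row (c s w00 w01 w10 w11 u00 u01 u10 u11 : ℂ) (hc : c ≠ 0) (hs : s ≠ 0)
    (hdet : u00 * u11 - u01 * u10 ≠ 0)
    (k0 : w00 = 0 ∨ w10 = 0) (k1 : w01 = 0 ∨ w11 = 0)
    (h0 : c * (w00 * u00 + w01 * u10) + s * (w10 * u00 + w11 * u10) = 0 ∨
      -s * (w00 * u00 + w01 * u10) + c * (w10 * u00 + w11 * u10) = 0)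
    (h1 : c * (w00 * u01 + w01 * u11) + s * (w10 * u01 + w11 * u11) = 0 ∨
      -s * (w00 * u01 + w01 * u11) + c * (w10 * u01 + w11 * u11) = 0) :
    (w00 = 0 ∧ w11 = 0) ∨ (w00 ≠ 0 ∧ w11 ≠ 0 ∧ w01 = 0 ∧ w10 = 0) := by
  have case1 : w00 = 0 → w01 = 0 → (w00 = 0 ∧ w11 = 0) := by
    intro a b
    subst a b
    have := aux_prod c s w10 w11 u00 u01 u10 u11 hc hs hdet
      (by simpa [hc, hs] using h0.symm) (by simpa [hc, hs] using h1.symm)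
    exact ⟨rfl, this.2⟩
  have case2 : w10 = 0 → w11 = 0 → (w00 = 0 ∧ w11 = 0) := by
    intro a b
    subst a b
    have := aux_prod c s w00 w01 u00 u01 u10 u11 hc hs hdet
      (by simpa [hc, hs] using h0) (by simpa [hc, hs] using h1)
    exact ⟨this.1, rfl⟩
  by_cases ha : w00 = 0 <;> by_cases hb : w11 = 0 <;> tauto

/-- Weights of a diagonal row agree. -/
lemma aux_norm (c s a b u00 u01 u10 u11 : ℂ) (hc : c ≠ 0) (hs : s ≠ 0)
    (ha : a ≠ 0) (hb : b ≠ 0)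
    (hdet : u00 * u11 - u01 * u10 ≠ 0) (hp : ‖u00‖ = ‖u11‖) (hq : ‖u01‖ = ‖u10‖)
    (h0 : c * (a * u00) + s * (b * u10) = 0 ∨ -s * (a * u00) + c * (b * u10) = 0)
    (h1 : c * (a * u01) + s * (b * u11) = 0 ∨ -s * (a * u01) + c * (b * u11) = 0) :
    ‖a‖ = ‖b‖ ∧ u00 ≠ 0 ∧ u10 ≠ 0 := by
  have n00 : u00 ≠ 0 := by
    rintro rfl
    have : u10 = 0 := by simpa [hc, hs, hb] using h0
    subst this
    simp at hdet
  have n10 : u10 ≠ 0 := by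
    rintro rfl
    have : u00 = 0 := by simpa [hc, hs, ha] using h0
    exact n00 this
  refine ⟨?_, n00, n10⟩
  have key : ‖c‖ * ‖s‖ * ‖u00‖ * ‖u10‖ ≠ 0 := by simp [hc, hs, n00, n10]
  have fin : (‖c‖ * ‖s‖ * ‖u00‖ * ‖u10‖) * (‖a‖ ^ 2 - ‖b‖ ^ 2) = 0 → ‖a‖ = ‖b‖ := by
    intro h
    have h2 : ‖a‖ ^ 2 - ‖b‖ ^ 2 = 0 := by simpa only [mul_eq_zero, key, false_or] using h
    exact (sq_eq_sq₀ (norm_nonneg _) (norm_nonneg _)).1 (by linarith)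
  rcases h0 with h0 | h0 <;> rcases h1 with h1 | h1
  · exfalso
    have : (c * a) * (u00 * u11 - u01 * u10) = 0 := by
      linear_combination u11 * h0 - u10 * h1
    simp [hc, ha, hdet] at this
  · have e0 := congrArg norm (eq_neg_of_add_eq_zero_left h0)
    have e1 := congrArg norm (show s * (a * u01) = c * (b * u11) by linear_combination -h1)
    simp only [norm_neg, norm_mul] at e0 e1
    rw [hq, ← hp] at e1
    apply fin
    linear_combination (‖s‖ * ‖a‖ * ‖u10‖) * e0 + (‖s‖ * ‖b‖ * ‖u10‖) * e1
  · have e1 := congrArg norm (eq_neg_of_add_eq_zero_left h1)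
    have e0 := congrArg norm (show s * (a * u00) = c * (b * u10) by linear_combination -h0)
    simp only [norm_neg, norm_mul] at e0 e1
    rw [hq, ← hp] at e1
    apply fin
    linear_combination (‖s‖ * ‖b‖ * ‖u00‖) * e0 + (‖s‖ * ‖a‖ * ‖u00‖) * e1
  · exfalso
    have : (s * a) * (u00 * u11 - u01 * u10) = 0 := by
      linear_combination -u11 * h0 + u10 * h1
    simp [hs, ha, hdet] at this

lemma aux_cross (c s a b u v : ℂ) (h1 : c * (a * u) + s * (b * v) = 0)
    (a' b' : ℂ) (h2 : -s * (a' * u) + c * (b' * v) = 0)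
    (hab : ‖a‖ = ‖b‖) (hab' : ‖a'‖ = ‖b'‖) (ha : a ≠ 0) (ha' : a' ≠ 0)
    (hu : u ≠ 0) : ‖c‖ = ‖s‖ := by
  have e0 := congrArg norm (eq_neg_of_add_eq_zero_left h1)
  have e1 := congrArg norm (show s * (a' * u) = c * (b' * v) by linear_combination -h2)
  simp only [norm_neg, norm_mul] at e0 e1
  rw [← hab] at e0
  rw [← hab'] at e1
  have e0' : ‖c‖ * ‖u‖ = ‖s‖ * ‖v‖ := by
    apply mul_left_cancel₀ (norm_ne_zero_iff.2 ha); linear_combination e0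
  have e1' : ‖s‖ * ‖u‖ = ‖c‖ * ‖v‖ := by
    apply mul_left_cancel₀ (norm_ne_zero_iff.2 ha'); linear_combination e1
  have : ‖u‖ * (‖c‖ ^ 2 - ‖s‖ ^ 2) = 0 := by
    linear_combination ‖c‖ * e0' - ‖s‖ * e1'
  have h2 : ‖c‖ ^ 2 - ‖s‖ ^ 2 = 0 := by
    simpa only [mul_eq_zero, norm_ne_zero_iff.2 hu, false_or] using this
  exact (sq_eq_sq₀ (norm_nonneg _) (norm_nonneg _)).1 (by linarith)

lemma aux_unit (U : Matrix (Fin 2) (Fin 2) ℂ) (hU : U ∈ Matrix.unitaryGroup (Fin 2) ℂ) :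
    U 0 0 * U 1 1 - U 0 1 * U 1 0 ≠ 0 ∧ ‖U 0 0‖ = ‖U 1 1‖ ∧ ‖U 0 1‖ = ‖U 1 0‖ := by
  have hdet : U.det ≠ 0 := by
    have := Matrix.det_of_mem_unitary hU
    intro h
    rw [h] at this
    simpa using (Unitary.mem_iff.1 this).1
  rw [Matrix.det_fin_two] at hdet
  have l := Matrix.mem_unitaryGroup_iff.1 hU
  have r := Matrix.mem_unitaryGroup_iff'.1 hU
  have l0 := congrFun (congrFun l 0) 0
  have r0 := congrFun (congrFun r 0) 0
  have r1 := congrFun (congrFun r 1) 1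
  simp [Matrix.mul_apply, Fin.sum_univ_two, Matrix.star_apply, Complex.mul_conj',
    Complex.conj_mul'] at l0 r0 r1
  norm_cast at l0 r0 r1
  refine ⟨hdet, ?_, ?_⟩
  · exact (sq_eq_sq₀ (norm_nonneg _) (norm_nonneg _)).1 (by linarith)
  · exact (sq_eq_sq₀ (norm_nonneg _) (norm_nonneg _)).1 (by linarith)

lemma aux_V (V : Matrix (Fin 2 × Fin 2) (Fin 2 × Fin 2) ℂ)
    (hV : V ∈ Matrix.unitaryGroup (Fin 2 × Fin 2) ℂ)
    (h : ∀ u v, V u (0,0) * V v (1,1) = V v (0,0) * V u (1,1)) : False := by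
  have r := Matrix.mem_unitaryGroup_iff'.1 hV
  have r00 := congrFun (congrFun r (0,0)) (0,0)
  have r01 := congrFun (congrFun r (0,0)) (1,1)
  have r11 := congrFun (congrFun r (1,1)) (1,1)
  simp only [Matrix.mul_apply, Matrix.star_apply] at r00 r01 r11
  rw [Matrix.one_apply_eq] at r00 r11
  rw [Matrix.one_apply_ne (by simp)] at r01
  have hz : ∀ v, V v (1,1) = 0 := by
    intro v
    calc V v (1,1) = (∑ u, star (V u (0,0)) * V u (0,0)) * V v (1,1) := by rw [r00, one_mul]
      _ = V v (0,0) * ∑ u, star (V u (0,0)) * V u (1,1) := by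
        rw [Finset.sum_mul, Finset.mul_sum]
        refine Finset.sum_congr rfl fun u _ => ?_
        linear_combination star (V u (0,0)) * h u v
      _ = 0 := by rw [r01, mul_zero]
  simp [hz] at r11

lemma aux_main (c s : ℂ) (U : Matrix (Fin 2) (Fin 2) ℂ)
    (V : Matrix (Fin 2 × Fin 2) (Fin 2 × Fin 2) ℂ)
    (hU : U ∈ Matrix.unitaryGroup (Fin 2) ℂ)
    (hV : V ∈ Matrix.unitaryGroup (Fin 2 × Fin 2) ℂ)
    (hc : c ≠ 0) (hs : s ≠ 0) (hcs : ‖c‖ ≠ ‖s‖)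
    (k : ∀ u j, V u (0, j) = 0 ∨ V u (1, j) = 0)
    (h : ∀ u j, c * (V u (0,0) * U 0 j + V u (0,1) * U 1 j)
        + s * (V u (1,0) * U 0 j + V u (1,1) * U 1 j) = 0 ∨
      -s * (V u (0,0) * U 0 j + V u (0,1) * U 1 j)
        + c * (V u (1,0) * U 0 j + V u (1,1) * U 1 j) = 0) : False := by
  obtain ⟨hdet, hp, hq⟩ := aux_unit U hU
  have cls : ∀ u, (V u (0,0) = 0 ∧ V u (1,1) = 0) ∨
      (V u (0,0) ≠ 0 ∧ ‖V u (0,0)‖ = ‖V u (1,1)‖ ∧ U 0 0 ≠ 0 ∧ U 1 0 ≠ 0 ∧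
       (c * (V u (0,0) * U 0 0) + s * (V u (1,1) * U 1 0) = 0 ∨
        -s * (V u (0,0) * U 0 0) + c * (V u (1,1) * U 1 0) = 0)) := by
    intro u
    rcases aux_row c s _ _ _ _ _ _ _ _ hc hs hdet (k u 0) (k u 1) (h u 0) (h u 1) with
      h' | ⟨ha, hb, h01, h10⟩
    · exact Or.inl h'
    · have h0 := h u 0
      have h1 := h u 1
      simp only [h01, h10, zero_mul, add_zero, zero_add] at h0 h1
      obtain ⟨n, n0, n1⟩ := aux_norm c s _ _ _ _ _ _ hc hs ha hb hdet hp hq h0 h1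
      exact Or.inr ⟨ha, n, n0, n1, h0⟩
  apply aux_V V hV
  intro u v
  rcases cls u with ⟨a, b⟩ | ⟨ha, n, hu0, hu1, h0⟩
  · simp [a, b]
  rcases cls v with ⟨a, b⟩ | ⟨ha', n', -, -, h0'⟩
  · simp [a, b]
  rcases h0 with h0 | h0 <;> rcases h0' with h0' | h0'
  · apply mul_left_cancel₀ (mul_ne_zero hs hu1)
    linear_combination V u (0,0) * h0' - V v (0,0) * h0
  · exact absurd (aux_cross c s _ _ _ _ h0 _ _ h0' n n' ha ha' hu0) hcs
  · exact absurd (aux_cross c s _ _ _ _ h0' _ _ h0 n' n ha' ha hu0) hcs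
  · apply mul_left_cancel₀ (mul_ne_zero hc hu1)
    linear_combination V u (0,0) * h0' - V v (0,0) * h0

/-- For `d = 2`, if an attack strategy `(U, V)` (with `U`, `V` unitary) satisfies the
DDC, then `θ` is an integer multiple of `π/4`. -/
theorem stmt_0 (θ : ℝ) (U : Matrix (Fin 2) (Fin 2) ℂ)
    (V : Matrix (Fin 2 × Fin 2) (Fin 2 × Fin 2) ℂ)
    (hU : U ∈ Matrix.unitaryGroup (Fin 2) ℂ)
    (hV : V ∈ Matrix.unitaryGroup (Fin 2 × Fin 2) ℂ)
    (hDDC : DDC 2 θ U V) :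
    ∃ k : ℤ, θ = k * (Real.pi / 4) := by
  by_contra hk
  have h4 : Real.sin (4 * θ) ≠ 0 := by
    intro h
    obtain ⟨n, hn⟩ := Real.sin_eq_zero_iff.1 h
    exact hk ⟨n, by linarith⟩
  have e4 : Real.sin (4 * θ) =
      4 * Real.sin θ * Real.cos θ * (Real.cos θ ^ 2 - Real.sin θ ^ 2) := by
    rw [show 4 * θ = 2 * (2 * θ) by ring, Real.sin_two_mul, Real.sin_two_mul,
      Real.cos_two_mul']
    ring
  rw [e4] at h4
  have hc : Real.cos θ ≠ 0 := by
    intro h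
    simp [h] at h4
  have hs : Real.sin θ ≠ 0 := by
    intro h
    simp [h] at h4
  have hcs : |Real.cos θ| ≠ |Real.sin θ| := by
    intro h
    rw [← sq_eq_sq_iff_abs_eq_abs] at h
    simp [h] at h4
  refine aux_main (Real.cos θ : ℂ) (Real.sin θ : ℂ) U V hU hV
    (by exact_mod_cast hc) (by exact_mod_cast hs)
    (by simpa only [Complex.norm_real, Real.norm_eq_abs] using hcs) ?_ ?_
  · intro u j
    have := hDDC u j 0
    simpa [psi] using this
  · intro u j
    have := hDDC u j 1
    simp only [psi, Matrix.mulVec_single_one, Matrix.col_apply, Fin.val_one, pow_one,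
      Matrix.mul_apply, Fintype.sum_prod_type, Fin.sum_univ_two, Matrix.kroneckerMap_apply,
      Rot] at this
    simp only [Matrix.of_apply, Matrix.cons_val_zero, Matrix.cons_val_one,
      Matrix.cons_val'] at this
    refine this.imp (fun h => ?_) (fun h => ?_)
    · linear_combination h
    · linear_combination h
end

section
/- Let θ ∈ ℝ and let d = 3. Suppose U is a 3×3 unitary complex matrix and V is a 6×6 unitary complex matrix such that the deterministic distinguishability condition (DDC) holds for the output states |ψ_b(x,s)⟩ = V (R_θ ⊗ U)^b (|x⟩ ⊗ |s⟩). Then θ is an integer multiple of π/2, i.e. there exists k ∈ ℤ with θ = kπ/2 (so only classical protocols can be broken exactly with a maximally entangled qutrit). -/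
open Matrix
open scoped Kronecker Classical

/-- Column orthogonality, entrywise. -/
lemma col_orth (W : Matrix (Fin 2 × Fin 3) (Fin 2 × Fin 3) ℂ) (hW : Wᴴ * W = 1)
    (i j : Fin 2 × Fin 3) :
    ∑ u, star (W u i) * W u j = if i = j then 1 else 0 := by
  have := congrFun (congrFun hW i) j
  rw [Matrix.mul_apply, Matrix.one_apply] at this
  simpa [Matrix.conjTranspose_apply] using this

lemma third (s s' : Fin 3) (h : s ≠ s') :
    ∃ r, r ≠ s ∧ r ≠ s' ∧ ∀ f : Fin 3 → ℝ, ∑ t, f t = f s + f s' + f r := by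
  fin_cases s <;> fin_cases s' <;> simp at h
  · exact ⟨2, by simp, by simp, fun f => by simp [Fin.sum_univ_three]⟩
  · exact ⟨1, by simp, by simp, fun f => by simp [Fin.sum_univ_three]; ring⟩
  · exact ⟨2, by simp, by simp, fun f => by simp [Fin.sum_univ_three]; ring⟩
  · exact ⟨0, by simp, by simp, fun f => by simp [Fin.sum_univ_three]; ring⟩
  · exact ⟨1, by simp, by simp, fun f => by simp [Fin.sum_univ_three]; ring⟩
  · exact ⟨0, by simp, by simp, fun f => by simp [Fin.sum_univ_three]; ring⟩

lemma core (W : Matrix (Fin 2 × Fin 3) (Fin 2 × Fin 3) ℂ) (hW : Wᴴ * W = 1)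
    (x x' : Fin 2) (hx : x ≠ x')
    (h0 : ∀ u s, W u (x, s) * W u (x', s) = 0)
    (hn : ∀ u, ∑ s, Complex.normSq (W u (x', s)) = 1 / 2)
    (u : Fin 2 × Fin 3) (s s' : Fin 3) (hs : W u (x, s) ≠ 0) (hs' : W u (x, s') ≠ 0) :
    s = s' := by
  by_contra hne
  obtain ⟨r, hr, hr', hsum⟩ := third s s' hne
  have F : ∀ w, W w (x, s) ≠ 0 → W w (x, s') ≠ 0 →
      Complex.normSq (W w (x', r)) = 1 / 2 := by
    intro w h1 h2
    have e1 : W w (x', s) = 0 := (mul_eq_zero.mp (h0 w s)).resolve_left h1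
    have e2 : W w (x', s') = 0 := (mul_eq_zero.mp (h0 w s')).resolve_left h2
    have := hn w
    rw [hsum, e1, e2] at this
    simpa using this
  have hu := F u hs hs'
  have o1 := col_orth W hW (x, s) (x, s')
  rw [if_neg (by simp [hne])] at o1
  obtain ⟨v, hvu, hv⟩ : ∃ v, v ≠ u ∧ star (W v (x, s)) * W v (x, s') ≠ 0 := by
    by_contra hcon
    push Not at hcon
    rw [Finset.sum_eq_single u (fun b _ hb => hcon b hb) (by simp)] at o1
    simp [hs, hs'] at o1
  have hv1 : W v (x, s) ≠ 0 := by
    intro h; simp [h] at hv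
  have hv2 : W v (x, s') ≠ 0 := by
    intro h; simp [h] at hv
  have hvn := F v hv1 hv2
  have hcol : ∑ w, Complex.normSq (W w (x', r)) = 1 := by
    have := col_orth W hW (x', r) (x', r)
    rw [if_pos rfl] at this
    have h2 : ((∑ w, Complex.normSq (W w (x', r)) : ℝ) : ℂ) = 1 := by
      rw [← this]; push_cast
      refine Finset.sum_congr rfl fun w _ => ?_
      rw [Complex.normSq_eq_conj_mul_self]; rfl
    exact_mod_cast h2
  have hz : ∀ w, w ≠ u → w ≠ v → W w (x', r) = 0 := by
    intro w h1 h2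
    have hle := Finset.sum_le_sum_of_subset_of_nonneg (Finset.subset_univ ({w, u, v} : Finset _))
      (f := fun w => Complex.normSq (W w (x', r))) (fun i _ _ => Complex.normSq_nonneg _)
    rw [hcol, Finset.sum_insert (by simp [h1, h2]), Finset.sum_pair hvu.symm, hu, hvn] at hle
    have := Complex.normSq_nonneg (W w (x', r))
    exact Complex.normSq_eq_zero.mp (by linarith)
  have E : ∀ t, star (W u (x', r)) * W u (x, t) + star (W v (x', r)) * W v (x, t) = 0 := by
    intro t
    have o := col_orth W hW (x', r) (x, t)
    rw [if_neg (by simp [hx.symm])] at o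
    rwa [Finset.sum_eq_add u v hvu.symm (fun c _ hc => by simp [hz c hc.1 hc.2])
      (by simp) (by simp)] at o
  have o2 : star (W u (x, s)) * W u (x, s') + star (W v (x, s)) * W v (x, s') = 0 := by
    rwa [Finset.sum_eq_add u v hvu.symm (fun c _ hc => by
      by_contra hcc
      have h1 : W c (x, s) ≠ 0 := by
        intro h; simp [h] at hcc
      have h2 : W c (x, s') ≠ 0 := by
        intro h; simp [h] at hcc
      have := F c h1 h2
      rw [hz c hc.1 hc.2] at this
      simp at this)
      (by simp) (by simp)] at o1
  have nu : star (W u (x', r)) * W u (x', r) = 1 / 2 := by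
    have := Complex.normSq_eq_conj_mul_self (z := W u (x', r))
    rw [hu] at this; rw [← starRingEnd_apply, ← this]; norm_num
  have nv : star (W v (x', r)) * W v (x', r) = 1 / 2 := by
    have := Complex.normSq_eq_conj_mul_self (z := W v (x', r))
    rw [hvn] at this; rw [← starRingEnd_apply, ← this]; norm_num
  have E1 := congrArg star (E s)
  have E2 := E s'
  simp only [star_add, star_mul, star_star, star_zero] at E1
  have : star (W u (x, s)) * W u (x, s') = 0 := by
    generalize star (W u (x, s)) = A at *
    generalize star (W v (x, s)) = A' at *
    generalize W u (x, s') = B at *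
    generalize W v (x, s') = B' at *
    generalize star (W u (x', r)) = C at *
    generalize star (W v (x', r)) = C' at *
    generalize W u (x', r) = D at *
    generalize W v (x', r) = D' at *
    linear_combination (-A * B) * nu + (A' * B') * nv + o2 / 2 + (C * B) * E1 - (A' * D') * E2
  simp [hs, hs'] at this

lemma dot_inv (U : Matrix (Fin 3) (Fin 3) ℂ) (hU : U * Uᴴ = 1) (x y : Fin 3 → ℂ) :
    (x ᵥ* U) ⬝ᵥ star (y ᵥ* U) = x ⬝ᵥ star y := by
  rw [star_vecMul, dotProduct_mulVec, vecMul_vecMul, hU, vecMul_one]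

lemma normSq_dot (x : Fin 3 → ℂ) : ((∑ s, Complex.normSq (x s) : ℝ) : ℂ) = x ⬝ᵥ star x := by
  simp [dotProduct, Complex.mul_conj]

lemma normSq_comb (c s : ℝ) (a b : ℂ) (h : a * b = 0) :
    Complex.normSq (c * a + s * b) = c ^ 2 * Complex.normSq a + s ^ 2 * Complex.normSq b := by
  rcases mul_eq_zero.mp h with h | h <;> simp only [h, Complex.normSq_mul, Complex.normSq_ofReal, mul_zero, zero_add, add_zero, map_zero] <;> ring

/-- For `d = 3`, if an attack strategy `(U, V)` (with `U`, `V` unitary) satisfies the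
DDC, then `θ` is an integer multiple of `π/2`: only classical protocols can be broken
exactly with a maximally entangled qutrit. -/
theorem stmt_1 (θ : ℝ) (U : Matrix (Fin 3) (Fin 3) ℂ)
    (V : Matrix (Fin 2 × Fin 3) (Fin 2 × Fin 3) ℂ)
    (hU : U ∈ Matrix.unitaryGroup (Fin 3) ℂ)
    (hV : V ∈ Matrix.unitaryGroup (Fin 2 × Fin 3) ℂ)
    (hDDC : DDC 3 θ U V) :
    ∃ k : ℤ, θ = k * (Real.pi / 2) := by
  by_contra hk
  have hsc : Real.sin θ * Real.cos θ ≠ 0 := by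
    intro h
    have : Real.sin (2 * θ) = 0 := by rw [Real.sin_two_mul]; linarith
    obtain ⟨n, hn⟩ := Real.sin_eq_zero_iff.mp this
    exact hk ⟨n, by linarith⟩
  set c := Real.cos θ with hc
  set σ := Real.sin θ with hσ
  have hc0 : c ≠ 0 := right_ne_zero_of_mul hsc
  have hσ0 : σ ≠ 0 := left_ne_zero_of_mul hsc
  have hcs : c ^ 2 + σ ^ 2 = 1 := by rw [hc, hσ]; exact Real.cos_sq_add_sin_sq θ
  have hUU : U * Uᴴ = 1 := Matrix.mem_unitaryGroup_iff.mp hU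
  have hUU' : Uᴴ * U = 1 := Matrix.mem_unitaryGroup_iff'.mp hU
  have hVV : V * Vᴴ = 1 := Matrix.mem_unitaryGroup_iff.mp hV
  have hVV' : Vᴴ * V = 1 := Matrix.mem_unitaryGroup_iff'.mp hV
  have hR : (Rot θ)ᴴ * Rot θ = 1 := by
    have hcs' : (c : ℂ) ^ 2 + (σ : ℂ) ^ 2 = 1 := by exact_mod_cast hcs
    ext i j
    fin_cases i <;> fin_cases j <;>
      simp [Rot, Matrix.mul_apply, Fin.sum_univ_two, -Complex.ofReal_cos, -Complex.ofReal_sin,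
        ← hc, ← hσ]
    · linear_combination hcs'
    · ring
    · ring
    · linear_combination hcs'
  set W := V * (Rot θ ⊗ₖ U) with hWdef
  have hWW : Wᴴ * W = 1 := by
    rw [hWdef, conjTranspose_mul, Matrix.mul_assoc, ← Matrix.mul_assoc Vᴴ, hVV', Matrix.one_mul,
      conjTranspose_kronecker, ← mul_kronecker_mul, hR, hUU', one_kronecker_one]
  have d0 : ∀ u s, V u (0, s) * V u (1, s) = 0 := by
    intro u s
    have := hDDC u s 0
    simpa [psi] using this
  have d1 : ∀ u s, W u (0, s) * W u (1, s) = 0 := by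
    intro u s
    have := hDDC u s 1
    simpa [psi, ← hWdef] using this
  let X : Fin 2 × Fin 3 → Fin 3 → ℂ := fun u s => c * V u (0, s) + σ * V u (1, s)
  let Y : Fin 2 × Fin 3 → Fin 3 → ℂ := fun u s => ((-σ : ℝ) : ℂ) * V u (0, s) + c * V u (1, s)
  have hX : ∀ u, (fun t => W u (0, t)) = X u ᵥ* U := by
    intro u; ext t
    simp [hWdef, X, Matrix.mul_apply, Matrix.vecMul, dotProduct, Fintype.sum_prod_type, Rot,
      Fin.sum_univ_three, -Complex.ofReal_cos, -Complex.ofReal_sin, ← hc, ← hσ]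
    ring
  have hY : ∀ u, (fun t => W u (1, t)) = Y u ᵥ* U := by
    intro u; ext t
    simp [hWdef, Y, Matrix.mul_apply, Matrix.vecMul, dotProduct, Fintype.sum_prod_type, Rot,
      Fin.sum_univ_three, -Complex.ofReal_cos, -Complex.ofReal_sin, ← hc, ← hσ]
    ring
  have row1 : ∀ u, ∑ s, Complex.normSq (V u (0, s)) + ∑ s, Complex.normSq (V u (1, s)) = 1 := by
    intro u
    have := congrFun (congrFun hVV u) u
    rw [Matrix.mul_apply, Matrix.one_apply_eq, Fintype.sum_prod_type, Fin.sum_univ_two] at this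
    simp only [conjTranspose_apply, ← starRingEnd_apply, Complex.mul_conj] at this
    exact_mod_cast this
  have eqn : ∀ u, ∑ s, Complex.normSq (V u (0, s)) = ∑ s, Complex.normSq (V u (1, s)) := by
    intro u
    have h := dot_inv U hUU (X u) (Y u)
    rw [← hX, ← hY] at h
    have hz : (fun t => W u (0, t)) ⬝ᵥ star (fun t => W u (1, t)) = 0 := by
      refine Finset.sum_eq_zero fun t _ => ?_
      rcases mul_eq_zero.mp (d1 u t) with h | h <;> simp [h]
    rw [hz] at h
    have key : X u ⬝ᵥ star (Y u) = ((c * σ * (∑ s, Complex.normSq (V u (1, s))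
        - ∑ s, Complex.normSq (V u (0, s))) : ℝ) : ℂ) := by
      rw [← Finset.sum_sub_distrib, Finset.mul_sum]
      push_cast
      refine Finset.sum_congr rfl fun s _ => ?_
      rcases mul_eq_zero.mp (d0 u s) with h | h
      · simp [X, Y, h, -Complex.ofReal_cos, -Complex.ofReal_sin, ← Complex.mul_conj]; ring
      · simp [X, Y, h, -Complex.ofReal_cos, -Complex.ofReal_sin, ← Complex.mul_conj]; ring
    rw [key] at h
    have h' : c * σ * (∑ s, Complex.normSq (V u (1, s))
        - ∑ s, Complex.normSq (V u (0, s))) = 0 := by exact_mod_cast h.symm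
    have := (mul_eq_zero.mp h').resolve_left (mul_ne_zero hc0 hσ0)
    linarith
  have nV0 : ∀ u, ∑ s, Complex.normSq (V u (0, s)) = 1 / 2 := fun u => by
    linarith [row1 u, eqn u]
  have nV1 : ∀ u, ∑ s, Complex.normSq (V u (1, s)) = 1 / 2 := fun u => by
    linarith [row1 u, eqn u]
  have nX : ∀ u, ∑ s, Complex.normSq (X u s) = 1 / 2 := fun u => by
    simp only [X, normSq_comb _ _ _ _ (d0 u _)]
    rw [Finset.sum_add_distrib, ← Finset.mul_sum, ← Finset.mul_sum, nV0, nV1]; linarith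
  have nY : ∀ u, ∑ s, Complex.normSq (Y u s) = 1 / 2 := fun u => by
    simp only [Y, normSq_comb _ _ _ _ (d0 u _)]
    rw [Finset.sum_add_distrib, ← Finset.mul_sum, ← Finset.mul_sum, nV0, nV1]; linarith
  have nW0 : ∀ u, ∑ s, Complex.normSq (W u (0, s)) = 1 / 2 := fun u => by
    have := normSq_dot (fun t => W u (0, t))
    rw [hX, dot_inv U hUU, ← normSq_dot, nX] at this
    have h2 := Complex.ofReal_injective this
    exact h2
  have nW1 : ∀ u, ∑ s, Complex.normSq (W u (1, s)) = 1 / 2 := fun u => by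
    have := normSq_dot (fun t => W u (1, t))
    rw [hY, dot_inv U hUU, ← normSq_dot, nY] at this
    have h2 := Complex.ofReal_injective this
    exact h2
  have cV0 := core V hVV' 0 1 (by simp) d0 nV1
  have cV1 := core V hVV' 1 0 (by simp) (fun u s => by rw [mul_comm]; exact d0 u s) nV0
  have cW0 := core W hWW 0 1 (by simp) d1 nW1
  have cW1 := core W hWW 1 0 (by simp) (fun u s => by rw [mul_comm]; exact d1 u s) nW0
  have ex : ∀ f : Fin 3 → ℂ, ∑ s, Complex.normSq (f s) = 1 / 2 → ∃ s, f s ≠ 0 := by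
    intro f hf
    by_contra hcon
    push Not at hcon
    simp [hcon] at hf
  have inv : ∀ x y : Fin 3 → ℂ, y = x ᵥ* U → x = y ᵥ* Uᴴ := by
    rintro x y rfl
    rw [vecMul_vecMul, hUU, vecMul_one]
  -- structure of each row
  have st : ∀ u, ∃ t t' : Fin 3, t ≠ t' ∧
      ∀ s, ((U s t = 0) ↔ X u s = 0) ∧ ((U s t' = 0) ↔ Y u s = 0) := by
    intro u
    obtain ⟨t, ht⟩ := ex _ (nW0 u)
    obtain ⟨t', ht'⟩ := ex _ (nW1 u)
    refine ⟨t, t', ?_, fun s => ⟨?_, ?_⟩⟩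
    · rintro rfl
      exact mul_ne_zero ht ht' (d1 u t)
    · have h := congrFun (inv _ _ (hX u)) s
      rw [Matrix.vecMul, dotProduct, Finset.sum_eq_single t (fun b _ hb => by
        have : W u (0, b) = 0 := by
          by_contra hb0; exact hb (cW0 u b t hb0 ht)
        simp [this]) (by simp)] at h
      rw [h]; simp [ht]
    · have h := congrFun (inv _ _ (hY u)) s
      rw [Matrix.vecMul, dotProduct, Finset.sum_eq_single t' (fun b _ hb => by
        have : W u (1, b) = 0 := by
          by_contra hb0; exact hb (cW1 u b t' hb0 ht')
        simp [this]) (by simp)] at h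
      rw [h]; simp [ht']
  obtain ⟨s, hs⟩ := ex _ (nV0 (0, 0))
  obtain ⟨s', hs'⟩ := ex _ (nV1 (0, 0))
  have hss : s ≠ s' := by
    rintro rfl; exact mul_ne_zero hs hs' (d0 _ _)
  obtain ⟨r, hr, hr', -⟩ := third s s' hss
  have r0 : V (0, 0) (0, r) = 0 := by
    by_contra h; exact hr (cV0 _ _ _ h hs)
  have r1 : V (0, 0) (1, r) = 0 := by
    by_contra h; exact hr' (cV1 _ _ _ h hs')
  obtain ⟨v, hv⟩ : ∃ v, V v (0, r) ≠ 0 := by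
    by_contra hcon
    push Not at hcon
    have := col_orth V hVV' (0, r) (0, r)
    simp [hcon] at this
  have hv' : V v (1, r) = 0 := (mul_eq_zero.mp (d0 v r)).resolve_left hv
  obtain ⟨t, t', htt, h1⟩ := st (0, 0)
  obtain ⟨τ, τ', hττ, h2⟩ := st v
  have a1 : U r t = 0 := (h1 r).1.mpr (by simp [X, r0, r1])
  have a2 : U r t' = 0 := (h1 r).2.mpr (by simp [Y, r0, r1])
  have hcC : (c : ℂ) ≠ 0 := by exact_mod_cast hc0
  have hσC : (σ : ℂ) ≠ 0 := by exact_mod_cast hσ0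
  have b1 : U r τ ≠ 0 := fun h => by
    have h3 : (c : ℂ) * V v (0, r) + σ * V v (1, r) = 0 := (h2 r).1.mp h
    rw [hv', mul_zero, add_zero] at h3
    exact mul_ne_zero hcC hv h3
  have b2 : U r τ' ≠ 0 := fun h => by
    have h3 : ((-σ : ℝ) : ℂ) * V v (0, r) + c * V v (1, r) = 0 := (h2 r).2.mp h
    rw [hv', mul_zero, add_zero, Complex.ofReal_neg] at h3
    exact mul_ne_zero (neg_ne_zero.mpr hσC) hv h3
  have c1 : t ≠ τ := by rintro rfl; exact b1 a1
  have c2 : t ≠ τ' := by rintro rfl; exact b2 a1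
  have c3 : t' ≠ τ := by rintro rfl; exact b1 a2
  have c4 : t' ≠ τ' := by rintro rfl; exact b2 a2
  omega
end

section
/- For every integer n ≥ 1, the minimum over θ̃ ∈ ℝ of the average squared overlap (1/n) ∑_{b=0}^{n−1} sin²(θ̃ + bπ/(2n)) is attained and equals (1/2) · (1 − (1/n) · csc(π/(2n))), where csc(x) = 1/sin(x). -/
open Real

lemma aux_sum (θ h : ℝ) (m : ℕ) :
    sin h * ∑ b ∈ Finset.range m, sin (θ + b * h) ^ 2
      = m / 2 * sin h - (1 / 4) * (sin (2 * θ - h + m * (2 * h)) - sin (2 * θ - h)) := by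
  induction m with
  | zero => simp
  | succ k ih =>
    rw [Finset.sum_range_succ, mul_add, ih]
    have e1 : 2 * θ - h + ((k + 1 : ℕ) : ℝ) * (2 * h) = 2 * (θ + k * h) + h := by
      push_cast; ring
    have e2 : 2 * θ - h + (k : ℝ) * (2 * h) = 2 * (θ + k * h) - h := by ring
    rw [e1, e2, sin_add (2 * (θ + k * h)), sin_sub (2 * (θ + k * h)), cos_two_mul, cos_sq']
    push_cast
    ring

lemma aux_avg (n : ℕ) (hn : 1 ≤ n) (θ : ℝ) :
    (1 / (n : ℝ)) * ∑ b ∈ Finset.range n, sin (θ + (b : ℝ) * π / (2 * n)) ^ 2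
      = (1 / 2) * (1 + (1 / (n : ℝ)) * (1 / sin (π / (2 * n))) * sin (2 * θ - π / (2 * n))) := by
  have hn0 : (0 : ℝ) < n := by exact_mod_cast hn
  have hs := (sin_pos_of_pos_of_lt_pi (x := π / (2 * n)) (by positivity) (by
    have : (1 : ℝ) ≤ n := by exact_mod_cast hn
    rw [div_lt_iff₀ (by positivity)]
    nlinarith [pi_pos])).ne'
  have key := aux_sum θ (π / (2 * n)) n
  have e : (n : ℝ) * (2 * (π / (2 * n))) = π := by field_simp
  rw [e, sin_add_pi] at key
  simp only [mul_div_assoc]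
  generalize sin (π / (2 * n)) = s at *
  generalize sin (2 * θ - π / (2 * n)) = t at *
  generalize (∑ b ∈ Finset.range n, sin (θ + (b : ℝ) * (π / (2 * n))) ^ 2) = S at *
  field_simp
  linarith

/-- For every integer `n ≥ 1`, the minimum over `θ̃ ∈ ℝ` of the average squared overlap
`(1/n) ∑_{b=0}^{n−1} sin²(θ̃ + bπ/(2n))` is attained and equals
`(1/2)(1 − (1/n) csc(π/(2n)))`, where `csc x = 1 / sin x`. -/
theorem stmt_7 (n : ℕ) (hn : 1 ≤ n) :
    IsLeast
      (Set.range fun θ : ℝ =>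
        (1 / (n : ℝ)) * ∑ b ∈ Finset.range n, Real.sin (θ + (b : ℝ) * Real.pi / (2 * n)) ^ 2)
      ((1 / 2) * (1 - (1 / (n : ℝ)) * (1 / Real.sin (Real.pi / (2 * n))))) := by
  have hn0 : (0 : ℝ) < n := by exact_mod_cast hn
  constructor
  · refine ⟨(π / (2 * n) - π / 2) / 2, ?_⟩
    show (1 / (n : ℝ)) * _ = _
    rw [aux_avg n hn]
    have e : 2 * ((π / (2 * n) - π / 2) / 2) - π / (2 * n) = -(π / 2) := by ring
    rw [e, sin_neg, sin_pi_div_two]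
    ring
  · rintro _ ⟨θ, rfl⟩
    show _ ≤ (1 / (n : ℝ)) * _
    rw [aux_avg n hn]
    have hs : 0 < sin (π / (2 * n)) := sin_pos_of_pos_of_lt_pi (by positivity) (by
      have : (1 : ℝ) ≤ n := by exact_mod_cast hn
      rw [div_lt_iff₀ (by positivity)]
      nlinarith [pi_pos])
    have hc : 0 ≤ (1 / (n : ℝ)) * (1 / sin (π / (2 * n))) := by positivity
    nlinarith [mul_nonneg hc (by linarith [neg_one_le_sin (2 * θ - π / (2 * n))] :
      0 ≤ sin (2 * θ - π / (2 * n)) + 1)]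
end

section
/- Let θ ∈ ℝ with θ not an integer multiple of π/2, let d ≥ 1, and let (U,V) be an attack strategy whose output states satisfy the deterministic distinguishability condition (DDC). Then for every b, x ∈ {0,1} and s ∈ {0,…,d−1}, the support supp(ψ_b(x,s)) = {u ∈ {0,…,2d−1} : ⟨u|ψ_b(x,s)⟩ ≠ 0} satisfies 2 ≤ |supp(ψ_b(x,s))| ≤ 2d − 2. -/
open Matrix
open scoped Kronecker Classical

lemma kron_aux {d : ℕ} (A : Matrix (Fin 2 × Fin d) (Fin 2 × Fin d) ℂ)
    (hA : A ∈ Matrix.unitaryGroup (Fin 2 × Fin d) ℂ)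
    (R : Matrix (Fin 2) (Fin 2) ℂ) (hR : ∀ i j, R i j ≠ 0)
    (U : Matrix (Fin d) (Fin d) ℂ) (hU : U ∈ Matrix.unitaryGroup (Fin d) ℂ)
    (hB : ∀ u s, (A * (R ⊗ₖ U)) u (0, s) = 0 ∨ (A * (R ⊗ₖ U)) u (1, s) = 0)
    (x : Fin 2) (s : Fin d) :
    2 ≤ (Finset.univ.filter fun u : Fin 2 × Fin d => A u (x, s) ≠ 0).card := by
  by_contra hlt
  have hle : (Finset.univ.filter fun u : Fin 2 × Fin d => A u (x, s) ≠ 0).card ≤ 1 := by omega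
  rw [Finset.card_le_one] at hle
  have hAA : star A * A = 1 := (Matrix.mem_unitaryGroup_iff').1 hA
  have hex : ∃ u, A u (x, s) ≠ 0 := by
    by_contra hno
    push Not at hno
    have h := congrFun (congrFun hAA (x, s)) (x, s)
    simp [Matrix.mul_apply, hno] at h
  obtain ⟨u, hu⟩ := hex
  have huniq : ∀ v, v ≠ u → A v (x, s) = 0 := by
    intro v hv
    by_contra hne
    exact hv (hle v (by simp [hne]) u (by simp [hu]))
  have hrow : ∀ k, k ≠ (x, s) → A u k = 0 := by
    intro k hk
    have h := congrFun (congrFun hAA (x, s)) k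
    rw [Matrix.mul_apply, Matrix.one_apply_ne hk.symm,
      Finset.sum_eq_single u] at h
    · simpa [Matrix.star_apply, hu] using h
    · intro v _ hv
      simp [Matrix.star_apply, huniq v hv]
    · simp
  have hprod : ∀ y t, (A * (R ⊗ₖ U)) u (y, t) = A u (x, s) * (R x y * U s t) := by
    intro y t
    rw [Matrix.mul_apply, Finset.sum_eq_single (x, s)]
    · rfl
    · intro k _ hk
      simp [hrow k hk]
    · simp
  have hUz : ∀ t, U s t = 0 := by
    intro t
    rcases hB u t with h | h <;> rw [hprod] at h <;> simpa [hu, hR] using h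
  have h := congrFun (congrFun ((Matrix.mem_unitaryGroup_iff).1 hU) s) s
  simp [Matrix.mul_apply, hUz] at h

lemma Rot_unitary (θ : ℝ) : Rot θ ∈ Matrix.unitaryGroup (Fin 2) ℂ := by
  rw [Matrix.mem_unitaryGroup_iff]
  have h : (Real.cos θ : ℂ) ^ 2 + (Real.sin θ : ℂ) ^ 2 = 1 := by
    exact_mod_cast Real.cos_sq_add_sin_sq θ
  ext i j
  fin_cases i <;> fin_cases j <;>
    simp only [Rot, Matrix.mul_apply, Fin.sum_univ_two, Matrix.star_apply] <;>
    simp [-Complex.ofReal_cos, -Complex.ofReal_sin] <;> first | linear_combination h | ring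

/-- If `θ` is not an integer multiple of `π/2` and the attack strategy `(U, V)`
satisfies the DDC, then every output state `ψ_b(x,s)` has support of size at least `2`
and at most `2d − 2`. -/
theorem stmt_18 (θ : ℝ) (hθ : ¬ ∃ k : ℤ, θ = k * (Real.pi / 2))
    (d : ℕ) (hd : 1 ≤ d) (U : Matrix (Fin d) (Fin d) ℂ)
    (V : Matrix (Fin 2 × Fin d) (Fin 2 × Fin d) ℂ)
    (hU : U ∈ Matrix.unitaryGroup (Fin d) ℂ)
    (hV : V ∈ Matrix.unitaryGroup (Fin 2 × Fin d) ℂ)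
    (hDDC : DDC d θ U V) :
    ∀ (b x : Fin 2) (s : Fin d),
      2 ≤ (Finset.univ.filter fun u : Fin 2 × Fin d => psi d θ U V b x s u ≠ 0).card ∧
      (Finset.univ.filter fun u : Fin 2 × Fin d => psi d θ U V b x s u ≠ 0).card ≤ 2 * d - 2 := by
  have hc : (Real.cos θ : ℂ) ≠ 0 := by
    intro h
    obtain ⟨k, hk⟩ := Real.cos_eq_zero_iff.1 (Complex.ofReal_eq_zero.1 h)
    exact hθ ⟨2 * k + 1, by rw [hk]; push_cast; ring⟩
  have hs : (Real.sin θ : ℂ) ≠ 0 := by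
    intro h
    obtain ⟨k, hk⟩ := Real.sin_eq_zero_iff.1 (Complex.ofReal_eq_zero.1 h)
    exact hθ ⟨2 * k, by rw [← hk]; push_cast; ring⟩
  have hR : ∀ i j, Rot θ i j ≠ 0 := by
    intro i j
    fin_cases i <;> fin_cases j <;> simp only [Rot] <;>
      simp [-Complex.ofReal_cos, -Complex.ofReal_sin, hc, hs]
  have hK : Rot θ ⊗ₖ U ∈ Matrix.unitaryGroup (Fin 2 × Fin d) ℂ :=
    Matrix.kronecker_mem_unitary (Rot_unitary θ) hU
  have p0 : ∀ x s u, psi d θ U V 0 x s u = V u (x, s) := by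
    intro x s u
    simp [psi]
  have p1 : ∀ x s u, psi d θ U V 1 x s u = (V * (Rot θ ⊗ₖ U)) u (x, s) := by
    intro x s u
    simp [psi]
  have hback : (V * (Rot θ ⊗ₖ U)) * (star (Rot θ) ⊗ₖ star U) = V := by
    have : star (Rot θ) ⊗ₖ star U = star (Rot θ ⊗ₖ U) :=
      (Matrix.conjTranspose_kronecker _ _).symm
    rw [this, Matrix.mul_assoc, (Matrix.mem_unitaryGroup_iff).1 hK, Matrix.mul_one]
  have key : ∀ (b x : Fin 2) (s : Fin d),
      2 ≤ (Finset.univ.filter fun u : Fin 2 × Fin d => psi d θ U V b x s u ≠ 0).card := by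
    intro b x s
    have hb : b = 0 ∨ b = 1 := by omega
    rcases hb with rfl | rfl
    · simp only [p0]
      refine kron_aux V hV (Rot θ) hR U hU (fun u t => ?_) x s
      simpa only [p1] using hDDC u t 1
    · simp only [p1]
      refine kron_aux _ (mul_mem hV hK) (star (Rot θ)) (fun i j => ?_) (star U)
        (Unitary.star_mem hU) (fun u t => ?_) x s
      · rw [Matrix.star_apply]
        exact star_ne_zero.2 (hR j i)
      · rw [hback]
        simpa only [p0] using hDDC u t 0
  intro b x s
  refine ⟨key b x s, ?_⟩
  have hdisj : Disjoint (Finset.univ.filter fun u : Fin 2 × Fin d => psi d θ U V b 0 s u ≠ 0)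
      (Finset.univ.filter fun u : Fin 2 × Fin d => psi d θ U V b 1 s u ≠ 0) := by
    rw [Finset.disjoint_left]
    intro u h0 h1
    simp only [Finset.mem_filter, Finset.mem_univ, true_and] at h0 h1
    rcases hDDC u s b with h | h
    · exact h0 h
    · exact h1 h
  have hcard := Finset.card_le_univ ((Finset.univ.filter fun u : Fin 2 × Fin d =>
    psi d θ U V b 0 s u ≠ 0) ∪ (Finset.univ.filter fun u : Fin 2 × Fin d =>
      psi d θ U V b 1 s u ≠ 0))
  rw [Finset.card_union_of_disjoint hdisj, Fintype.card_prod, Fintype.card_fin,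
    Fintype.card_fin] at hcard
  have k0 := key b 0 s
  have k1 := key b 1 s
  have hx : x = 0 ∨ x = 1 := by omega
  rcases hx with rfl | rfl
  · omega
  · omega
end
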